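/- For every real x one has 45x⁸ − 90x⁶ + 60x⁴ − 15x² + 1 = 45(x² − a²)(x² − b²)(x² − c²)(x² − d²); that is, ±a, ±b, ±c, ±d are exactly the eight roots of the polynomial 45x⁸ − 90x⁶ + 60x⁴ − 15x² + 1. -/

import Mathlib

noncomputable section
open Real Complex

namespace Triacontagonal

/-- The golden ratio. -/
def τ : ℝ := (1 + Real.sqrt 5) / 2

/-- The constant 3^(-1/2) * 5^(-1/4). -/
def k0 : ℝ := (3 : ℝ) ^ (-(1:ℝ)/2) * (5 : ℝ) ^ (-(1:ℝ)/4)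

/-- `a` is the positive real with 2a² = 1 + 3^(-1/2)·5^(-1/4)·τ^(3/2). -/
def a : ℝ := Real.sqrt ((1 + k0 * τ ^ ((3:ℝ)/2)) / 2)

/-- `b` is the positive real with 2b² = 1 + 3^(-1/2)·5^(-1/4)·τ^(-3/2). -/
def b : ℝ := Real.sqrt ((1 + k0 * τ ^ (-((3:ℝ)/2))) / 2)

/-- `c` is the positive real with 2c² = 1 - 3^(-1/2)·5^(-1/4)·τ^(-3/2). -/
def c : ℝ := Real.sqrt ((1 - k0 * τ ^ (-((3:ℝ)/2))) / 2)

/-- `d` is the positive real with 2d² = 1 - 3^(-1/2)·5^(-1/4)·τ^(3/2). -/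
def d : ℝ := Real.sqrt ((1 - k0 * τ ^ ((3:ℝ)/2)) / 2)

lemma k0_sq : k0 ^ 2 = 1 / (3 * Real.sqrt 5) := by
  unfold k0
  rw [mul_pow, ← Real.rpow_natCast, ← Real.rpow_natCast, ← Real.rpow_mul (by norm_num),
    ← Real.rpow_mul (by norm_num), Real.sqrt_eq_rpow]
  rw [show -(1:ℝ)/2 * ((2:ℕ):ℝ) = -1 by norm_num,
    show -(1:ℝ)/4 * ((2:ℕ):ℝ) = -(1/2) by norm_num,
    Real.rpow_neg (by norm_num), Real.rpow_neg (by norm_num), Real.rpow_one]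
  field_simp

lemma s5 : Real.sqrt 5 ^ 2 = 5 := Real.sq_sqrt (by norm_num)

lemma τ_pos : 0 < τ := by
  unfold τ
  positivity

lemma τ_three : τ ^ 3 = 2 + Real.sqrt 5 := by
  unfold τ
  linear_combination (Real.sqrt 5 + 3) / 8 * s5

lemma pp : (τ ^ ((3:ℝ)/2)) ^ 2 = 2 + Real.sqrt 5 := by
  rw [← τ_three, ← Real.rpow_natCast, ← Real.rpow_mul τ_pos.le, ← Real.rpow_natCast]
  norm_num

lemma pq : τ ^ ((3:ℝ)/2) * τ ^ (-((3:ℝ)/2)) = 1 := by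
  rw [← Real.rpow_add τ_pos]
  simp

lemma qq : (τ ^ (-((3:ℝ)/2))) ^ 2 = Real.sqrt 5 - 2 := by
  have h1 := pp
  have h2 := pq
  have h3 : (2 + Real.sqrt 5) * (τ ^ (-((3:ℝ)/2))) ^ 2 = 1 := by
    rw [← h1, ← mul_pow, h2, one_pow]
  linear_combination (Real.sqrt 5 - 2) * h3 - (τ ^ (-((3:ℝ)/2))) ^ 2 * s5

lemma sum_sq : (k0 * τ ^ ((3:ℝ)/2)) ^ 2 + (k0 * τ ^ (-((3:ℝ)/2))) ^ 2 = 2 / 3 := by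
  rw [mul_pow, mul_pow, pp, qq, k0_sq]
  have : Real.sqrt 5 ≠ 0 := by positivity
  field_simp
  ring

lemma prod_sq : (k0 * τ ^ ((3:ℝ)/2)) ^ 2 * (k0 * τ ^ (-((3:ℝ)/2))) ^ 2 = 1 / 45 := by
  rw [mul_pow, mul_pow, pp, qq, k0_sq]
  have : Real.sqrt 5 ≠ 0 := by positivity
  field_simp
  linear_combination 36 * s5

lemma factor (x : ℝ) : 45 * x ^ 8 - 90 * x ^ 6 + 60 * x ^ 4 - 15 * x ^ 2 + 1 =
      45 * (x ^ 2 - a ^ 2) * (x ^ 2 - b ^ 2) * (x ^ 2 - c ^ 2) * (x ^ 2 - d ^ 2) := by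
  have h1 := sum_sq
  have h2 := prod_sq
  unfold a b c d
  generalize k0 * τ ^ ((3:ℝ)/2) = u at *
  generalize k0 * τ ^ (-((3:ℝ)/2)) = v at *
  have hu : |u| ≤ 1 := abs_le_one_iff_mul_self_le_one.2 (by nlinarith [sq_nonneg v])
  have hv : |v| ≤ 1 := abs_le_one_iff_mul_self_le_one.2 (by nlinarith [sq_nonneg u])
  rw [abs_le] at hu hv
  rw [Real.sq_sqrt (by linarith), Real.sq_sqrt (by linarith), Real.sq_sqrt (by linarith),
    Real.sq_sqrt (by linarith)]
  linear_combination 45 / 16 * (2 * x ^ 2 - 1) ^ 2 * h1 - 45 / 16 * h2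

/-- the polynomial 45x⁸ − 90x⁶ + 60x⁴ − 15x² + 1 factors as
45(x²−a²)(x²−b²)(x²−c²)(x²−d²), so ±a, ±b, ±c, ±d are exactly its roots. -/
theorem stmt2 :
    (∀ x : ℝ, 45 * x ^ 8 - 90 * x ^ 6 + 60 * x ^ 4 - 15 * x ^ 2 + 1 =
      45 * (x ^ 2 - a ^ 2) * (x ^ 2 - b ^ 2) * (x ^ 2 - c ^ 2) * (x ^ 2 - d ^ 2)) ∧
    {x : ℝ | 45 * x ^ 8 - 90 * x ^ 6 + 60 * x ^ 4 - 15 * x ^ 2 + 1 = 0} =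
      {a, -a, b, -b, c, -c, d, -d} := by
  refine ⟨factor, ?_⟩
  ext x
  simp only [Set.mem_ofPred_eq, Set.mem_insert_iff, Set.mem_singleton_iff]
  rw [factor x]
  simp only [mul_eq_zero, sub_eq_zero, sq_eq_sq_iff_eq_or_eq_neg]
  norm_num
  tauto

end Triacontagonal
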